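/- Let k ≤ n be positive integers, let G be a subgroup of the unitary group U(k), and let 𝔤 be a real subspace of the skew-Hermitian k×k complex matrices such that u⁻¹ x u ∈ 𝔤 for all u ∈ G and x ∈ 𝔤. Equip the space of k×k complex matrices with the real inner product ⟨X,Y⟩ = Re(trace(Xᴴ Y)), and let P denote the orthogonal projection onto 𝔤. Define ω_G(A)(M) := P(AᴴM) for n×k complex matrices A, M with AᴴA = I_k and MᴴA + AᴴM = 0. Then: (i) for every u ∈ G one has the equivariance ω_G(Au)(Mu) = P((Au)ᴴ(Mu)) = u⁻¹ P(AᴴM) u = u⁻¹ ω_G(A)(M) u; (ii) for every x ∈ 𝔤 one has ω_G(A)(Ax) = P(Aᴴ(Ax)) = x; (iii) if j(A) denotes the (n+1)×k matrix obtained from A by appending a row of zeros, then P(j(A)ᴴ j(M)) = P(AᴴM). -/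

import Mathlib

/-!
An orthogonal projection onto `𝔤` is characterized by `P X ∈ 𝔤` and `X - P X ⟂ 𝔤`, so it commutes
with every linear map that preserves `𝔤` together with its adjoint. For `u ∈ G`, the Frobenius
adjoint of `X ↦ uᴴ X u` is `X ↦ u X uᴴ`, the conjugation attached to `u⁻¹ ∈ G`, and
`(A u)ᴴ (M u) = uᴴ (Aᴴ M) u`; this gives equivariance. Appending a zero row is left multiplication
by a matrix `J` with `Jᴴ J = 1`, which leaves `Aᴴ M` unchanged.
-/

open Matrix

/-- The `(n+1) × k` matrix obtained from an `n × k` matrix by appending a row of zeros;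
this realizes the natural inclusion `V_k(ℂⁿ) → V_k(ℂⁿ⁺¹)` on matrices. -/
def appendZeroRow {n k : ℕ} (A : Matrix (Fin n) (Fin k) ℂ) :
    Matrix (Fin (n + 1)) (Fin k) ℂ :=
  Matrix.of fun i j => if h : (i : ℕ) < n then A ⟨(i : ℕ), h⟩ j else 0

/-- The real Frobenius inner product `⟨X, Y⟩ = Re (trace (Xᴴ Y))` on `k × k` complex
matrices. -/
noncomputable def frobeniusInnerRe {k : ℕ} (X Y : Matrix (Fin k) (Fin k) ℂ) : ℝ :=
  (Xᴴ * Y).trace.re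

section FrobeniusProjection

variable {ι κ R 𝕜 : Type*} [Fintype ι] [Fintype κ] [CommSemiring R] [StarRing R] [RCLike 𝕜]

theorem trace_conjTranspose_mul_mul_mul (U : Matrix ι ι R) (V : Matrix κ κ R)
    (X Y : Matrix ι κ R) :
    ((U * X * V)ᴴ * Y).trace = (Xᴴ * (Uᴴ * Y * Vᴴ)).trace :=
  calc ((U * X * V)ᴴ * Y).trace
      = (Vᴴ * (Xᴴ * Uᴴ * Y)).trace := by simp only [conjTranspose_mul, Matrix.mul_assoc]
    _ = (Xᴴ * Uᴴ * Y * Vᴴ).trace := trace_mul_comm _ _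
    _ = (Xᴴ * (Uᴴ * Y * Vᴴ)).trace := by simp only [Matrix.mul_assoc]

open ComplexOrder in
theorem re_trace_conjTranspose_mul_self_eq_zero_iff {D : Matrix ι κ 𝕜} :
    RCLike.re (Dᴴ * D).trace = 0 ↔ D = 0 := by
  have him : RCLike.im (Dᴴ * D).trace = 0 :=
    (RCLike.nonneg_iff.mp (posSemidef_conjTranspose_mul_self D).trace_nonneg).2
  rw [← trace_conjTranspose_mul_self_eq_zero_iff, RCLike.ext_iff (K := 𝕜)]
  simp only [him, map_zero, and_true]

/-- `P` is the orthogonal projection onto the real subspace `𝔤` for the real Frobenius inner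
product `⟨X, Y⟩ = re (trace (Xᴴ Y))`. Linearity of `P` is not a field: these two conditions
determine `P`, hence imply it. -/
structure IsFrobeniusProjection (𝔤 : Submodule ℝ (Matrix ι κ 𝕜))
    (P : Matrix ι κ 𝕜 → Matrix ι κ 𝕜) : Prop where
  apply_mem : ∀ X, P X ∈ 𝔤
  orthogonal : ∀ X, ∀ Y ∈ 𝔤, RCLike.re ((X - P X)ᴴ * Y).trace = 0

namespace IsFrobeniusProjection

variable {𝔤 : Submodule ℝ (Matrix ι κ 𝕜)} {P : Matrix ι κ 𝕜 → Matrix ι κ 𝕜}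

theorem apply_eq_of_mem_of_orthogonal (hP : IsFrobeniusProjection 𝔤 P) {X Z : Matrix ι κ 𝕜}
    (hZ : Z ∈ 𝔤) (hXZ : ∀ Y ∈ 𝔤, RCLike.re ((X - Z)ᴴ * Y).trace = 0) : P X = Z := by
  have hD : P X - Z ∈ 𝔤 := 𝔤.sub_mem (hP.apply_mem X) hZ
  have hsplit : P X - Z = (X - Z) - (X - P X) := by abel
  rw [← sub_eq_zero, ← re_trace_conjTranspose_mul_self_eq_zero_iff]
  calc RCLike.re ((P X - Z)ᴴ * (P X - Z)).trace
      = RCLike.re ((X - Z)ᴴ * (P X - Z)).trace - RCLike.re ((X - P X)ᴴ * (P X - Z)).trace := by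
        rw [← map_sub, ← trace_sub, ← Matrix.sub_mul, ← conjTranspose_sub, ← hsplit]
    _ = 0 := by rw [hXZ _ hD, hP.orthogonal X _ hD, sub_zero]

theorem apply_of_mem (hP : IsFrobeniusProjection 𝔤 P) {X : Matrix ι κ 𝕜} (hX : X ∈ 𝔤) :
    P X = X :=
  hP.apply_eq_of_mem_of_orthogonal hX fun Y _ => by simp

theorem apply_mul_mul (hP : IsFrobeniusProjection 𝔤 P) {U : Matrix ι ι 𝕜} {V : Matrix κ κ 𝕜}
    (hUV : ∀ Y ∈ 𝔤, U * Y * V ∈ 𝔤) (hUV_adjoint : ∀ Y ∈ 𝔤, Uᴴ * Y * Vᴴ ∈ 𝔤)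
    (X : Matrix ι κ 𝕜) : P (U * X * V) = U * P X * V := by
  refine hP.apply_eq_of_mem_of_orthogonal (hUV _ (hP.apply_mem X)) fun Y hY => ?_
  rw [← Matrix.sub_mul, ← Matrix.mul_sub, trace_conjTranspose_mul_mul_mul]
  exact hP.orthogonal X _ (hUV_adjoint Y hY)

end IsFrobeniusProjection

end FrobeniusProjection

theorem conjTranspose_mul_mul_of_isometry {ι ι' κ μ R : Type*} [Fintype ι] [Fintype ι']
    [DecidableEq ι] [Semiring R] [StarRing R] {J : Matrix ι' ι R} (hJ : Jᴴ * J = 1)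
    (A : Matrix ι κ R) (M : Matrix ι μ R) : (J * A)ᴴ * (J * M) = Aᴴ * M := by
  rw [conjTranspose_mul, Matrix.mul_assoc, ← Matrix.mul_assoc Jᴴ, hJ, Matrix.one_mul]

theorem unitaryGroup_coe_inv_eq_conjTranspose {κ R : Type*} [Fintype κ] [DecidableEq κ]
    [CommRing R] [StarRing R] (u : unitaryGroup κ R) :
    (u : Matrix κ κ R)⁻¹ = (u : Matrix κ κ R)ᴴ :=
  inv_eq_left_inv (UnitaryGroup.star_mul_self u)

section AppendZeroRow

variable {n k : ℕ}

theorem appendZeroRow_one_mul (A : Matrix (Fin n) (Fin k) ℂ) :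
    appendZeroRow (1 : Matrix (Fin n) (Fin n) ℂ) * A = appendZeroRow A := by
  ext i j
  by_cases hi : (i : ℕ) < n <;> simp [appendZeroRow, Matrix.mul_apply, Matrix.one_apply, hi]

theorem conjTranspose_appendZeroRow_one_mul_self :
    (appendZeroRow (1 : Matrix (Fin n) (Fin n) ℂ))ᴴ *
      appendZeroRow (1 : Matrix (Fin n) (Fin n) ℂ) = 1 := by
  ext i j
  simp [appendZeroRow, Matrix.mul_apply, Fin.sum_univ_castSucc, Matrix.one_apply, eq_comm]

end AppendZeroRow

theorem stiefel_projected_connection_general {ι ι' κ 𝕜 : Type*} [Fintype ι] [DecidableEq ι]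
    [Fintype ι'] [Fintype κ] [DecidableEq κ] [RCLike 𝕜]
    (G : Subgroup (unitaryGroup κ 𝕜)) {𝔤 : Submodule ℝ (Matrix κ κ 𝕜)}
    (h𝔤inv : ∀ u ∈ G, ∀ x ∈ 𝔤, (u : Matrix κ κ 𝕜)⁻¹ * x * (u : Matrix κ κ 𝕜) ∈ 𝔤)
    {P : Matrix κ κ 𝕜 → Matrix κ κ 𝕜} (hP : IsFrobeniusProjection 𝔤 P)
    {A : Matrix ι κ 𝕜} (hA : Aᴴ * A = 1) (M : Matrix ι κ 𝕜)
    {J : Matrix ι' ι 𝕜} (hJ : Jᴴ * J = 1) :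
    (∀ u ∈ G, P ((A * (u : Matrix κ κ 𝕜))ᴴ * (M * (u : Matrix κ κ 𝕜))) =
      (u : Matrix κ κ 𝕜)⁻¹ * P (Aᴴ * M) * (u : Matrix κ κ 𝕜)) ∧
    (∀ x ∈ 𝔤, P (Aᴴ * (A * x)) = x) ∧
    P ((J * A)ᴴ * (J * M)) = P (Aᴴ * M) := by
  simp only [unitaryGroup_coe_inv_eq_conjTranspose] at h𝔤inv ⊢
  refine ⟨fun u hu => ?equivariance, fun x hx => ?vertical, ?inclusion⟩
  case equivariance =>
    have hpullback : (A * (u : Matrix κ κ 𝕜))ᴴ * (M * (u : Matrix κ κ 𝕜)) =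
        (u : Matrix κ κ 𝕜)ᴴ * (Aᴴ * M) * (u : Matrix κ κ 𝕜) := by
      simp only [conjTranspose_mul, Matrix.mul_assoc]
    rw [hpullback]
    exact hP.apply_mul_mul (h𝔤inv u hu) (h𝔤inv u⁻¹ (G.inv_mem hu)) _
  case vertical => rw [← Matrix.mul_assoc, hA, Matrix.one_mul, hP.apply_of_mem hx]
  case inclusion => rw [conjTranspose_mul_mul_of_isometry hJ]

/-- **Proposition 4.2.** Let `G` be a subgroup of `U(k)` and let `𝔤` be a real
subspace of skew-Hermitian `k × k` matrices with `u⁻¹ x u ∈ 𝔤` for all `u ∈ G`, `x ∈ 𝔤`.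
Let `P` be the orthogonal projection onto `𝔤` for the real inner product
`⟨X, Y⟩ = Re (trace (Xᴴ Y))`, and set `ω_G(A)(M) = P (AᴴM)` for `A, M` with `AᴴA = I` and
`MᴴA + AᴴM = 0`. Then: (i) `P ((Au)ᴴ (Mu)) = u⁻¹ P (AᴴM) u` for all `u ∈ G`;
(ii) `P (Aᴴ (Ax)) = x` for all `x ∈ 𝔤`; (iii) `P (j(A)ᴴ j(M)) = P (AᴴM)` for the inclusion
`j` appending a zero row. -/
theorem stiefel_projected_connection {k n : ℕ} (hk : 0 < k) (hkn : k ≤ n)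
    (G : Subgroup (Matrix.unitaryGroup (Fin k) ℂ))
    (𝔤 : Submodule ℝ (Matrix (Fin k) (Fin k) ℂ))
    (h𝔤skew : ∀ x ∈ 𝔤, xᴴ = -x)
    (h𝔤inv : ∀ u : Matrix.unitaryGroup (Fin k) ℂ, u ∈ G →
      ∀ x ∈ 𝔤, (u : Matrix (Fin k) (Fin k) ℂ)⁻¹ * x * (u : Matrix (Fin k) (Fin k) ℂ) ∈ 𝔤)
    (P : Matrix (Fin k) (Fin k) ℂ →ₗ[ℝ] Matrix (Fin k) (Fin k) ℂ)
    (hPmem : ∀ X, P X ∈ 𝔤)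
    (hPfix : ∀ X ∈ 𝔤, P X = X)
    (hPorth : ∀ X : Matrix (Fin k) (Fin k) ℂ, ∀ Y ∈ 𝔤, frobeniusInnerRe (X - P X) Y = 0)
    (A M : Matrix (Fin n) (Fin k) ℂ)
    (hA : Aᴴ * A = 1) (hM : Mᴴ * A + Aᴴ * M = 0) :
    (∀ u : Matrix.unitaryGroup (Fin k) ℂ, u ∈ G →
      P ((A * (u : Matrix (Fin k) (Fin k) ℂ))ᴴ * (M * (u : Matrix (Fin k) (Fin k) ℂ))) =
        (u : Matrix (Fin k) (Fin k) ℂ)⁻¹ * P (Aᴴ * M) * (u : Matrix (Fin k) (Fin k) ℂ)) ∧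
    (∀ x ∈ 𝔤, P (Aᴴ * (A * x)) = x) ∧
    P ((appendZeroRow A)ᴴ * appendZeroRow M) = P (Aᴴ * M) := by
  simpa only [appendZeroRow_one_mul] using stiefel_projected_connection_general G h𝔤inv
    (P := P) ⟨hPmem, hPorth⟩ hA M conjTranspose_appendZeroRow_one_mul_self
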